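/- (Telescoped inequality, Appendix C of the paper.) In the over-the-air federated PG model, if 0 < α ≤ 1/(m_h·L), then for every integer K ≥ 1, E[J(θ^K)] − J(θ^0) ≤ (α·((M−1)·σ_h² − M·(N+1)·m_h²)/(2·M·N·m_h))·Σ_{k=0}^{K−1} E[‖∇J(θ^k)‖²] + α·K·σ̄²/(2·m_h·N²) + α·K·σ_h²·V²/(2·M·N·m_h). -/

import Mathlib

open MeasureTheory ProbabilityTheory Gradient

/-- The family `{h_i}_i ∪ {X_{i,m}}_{i,m} ∪ {n}` combined into a single family of random
variables with common codomain `ℝ × ℝ^d`; each member generates exactly the σ-algebra of the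
corresponding original random variable, so (conditional) mutual independence of this family is
equivalent to (conditional) mutual independence of the original family. -/
def otaFam {d N M : ℕ} {Ω : Type*}
    (h : Fin N → Ω → ℝ) (X : Fin N → Fin M → Ω → EuclideanSpace ℝ (Fin d))
    (n : Ω → EuclideanSpace ℝ (Fin d)) :
    Fin N ⊕ (Fin N × Fin M) ⊕ Unit → Ω → ℝ × EuclideanSpace ℝ (Fin d)
  | Sum.inl i => fun ω => (h i ω, 0)
  | Sum.inr (Sum.inl (i, m)) => fun ω => (0, X i m ω)
  | Sum.inr (Sum.inr _) => fun ω => (0, n ω)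

/-!
Almost every conditional law `condExpKernel μ (𝓕 k) ω` turns conditional independence given `𝓕 k`
into plain independence, so under it the aggregate `v` of round `k` has mean `N m_h ∇J(θ)` and a
second moment computed from orthogonality of centered independent vectors: agents, samples within
a batch, and noise separate. In the descent inequality
`E J(θ - (α/N) v) - E J(θ) ≤ -(α/N) E⟪∇J(θ), v⟫ + (L/2) (α/N)² E‖v‖²` the condition `α m_h L ≤ 1`
lets the factor `(L/2) (α/N)²` be replaced by `α / (2 m_h N²)`, which makes the bound linear in
`α`; summing over the rounds telescopes the left-hand side.
-/

section Smooth

variable {E : Type*} [NormedAddCommGroup E] [InnerProductSpace ℝ E] [CompleteSpace E]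
  {J : E → ℝ} {L : NNReal}

theorem hasDerivAt_comp_add_smul (hJ : Differentiable ℝ J) (x u : E) (t : ℝ) :
    HasDerivAt (fun t : ℝ => J (x + t • u)) (inner ℝ (∇ J (x + t • u)) u) t := by
  have hline : HasDerivAt (fun t : ℝ => x + t • u) u t := by
    simpa using ((hasDerivAt_id t).smul_const u).const_add x
  simpa [InnerProductSpace.toDual_apply_apply] using!
    (hJ (x + t • u)).hasGradientAt.hasFDerivAt.comp_hasDerivAt t hline

theorem abs_sub_sub_inner_gradient_le (hJ : Differentiable ℝ J) (hLip : LipschitzWith L (∇ J))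
    (x y : E) : |J y - J x - inner ℝ (∇ J x) (y - x)| ≤ L / 2 * ‖y - x‖ ^ 2 := by
  set u := y - x
  have hremainder (t : ℝ) : HasDerivAt (fun t : ℝ => J (x + t • u) - J x - t * inner ℝ (∇ J x) u)
      (inner ℝ (∇ J (x + t • u) - ∇ J x) u) t := by
    simpa [inner_sub_left] using
      ((hasDerivAt_comp_add_smul hJ x u t).sub_const (J x)).fun_sub
        ((hasDerivAt_id t).mul_const (inner ℝ (∇ J x) u))
  have hmajorant (t : ℝ) :
      HasDerivAt (fun t : ℝ => L / 2 * ‖u‖ ^ 2 * t ^ 2) (L * ‖u‖ ^ 2 * t) t :=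
    ((hasDerivAt_pow 2 t).const_mul (L / 2 * ‖u‖ ^ 2)).congr_deriv (by push_cast; ring)
  have hderiv_le (t : ℝ) (ht : t ∈ Set.Ico (0 : ℝ) 1) :
      ‖(inner ℝ (∇ J (x + t • u) - ∇ J x) u : ℝ)‖ ≤ L * ‖u‖ ^ 2 * t :=
    calc ‖(inner ℝ (∇ J (x + t • u) - ∇ J x) u : ℝ)‖
        ≤ ‖∇ J (x + t • u) - ∇ J x‖ * ‖u‖ := norm_inner_le_norm _ _
      _ ≤ L * ‖x + t • u - x‖ * ‖u‖ := by gcongr; exact hLip.norm_sub_le _ _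
      _ = L * ‖u‖ ^ 2 * t := by
        rw [add_sub_cancel_left, norm_smul, Real.norm_of_nonneg ht.1]; ring
  simpa [u] using image_norm_le_of_norm_deriv_right_le_deriv_boundary (a := 0) (b := 1)
    (fun t _ => (hremainder t).continuousAt.continuousWithinAt)
    (fun t _ => (hremainder t).hasDerivWithinAt) (by simp) hmajorant hderiv_le
    (Set.right_mem_Icc.2 zero_le_one)

end Smooth

section SquareIntegrable

variable {Ω E : Type*} [MeasurableSpace Ω] {μ : Measure Ω}
  [NormedAddCommGroup E]

theorem integrable_inner_of_memLp_two [InnerProductSpace ℝ E] {f g : Ω → E}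
    (hf : MemLp f 2 μ) (hg : MemLp g 2 μ) : Integrable (fun ω => inner ℝ (f ω) (g ω)) μ :=
  (hf.norm.integrable_mul hg.norm).mono' (hf.aestronglyMeasurable.inner hg.aestronglyMeasurable)
    (.of_forall fun _ => norm_inner_le_norm _ _)

theorem memLp_lipschitzWith_comp {F : Type*} [NormedAddCommGroup F] [IsFiniteMeasure μ]
    {K : NNReal} {p : ENNReal} {φ : E → F} (hφ : LipschitzWith K φ) {f : Ω → E}
    (hf : MemLp f p μ) : MemLp (fun ω => φ (f ω)) p μ := by
  have hcentered : MemLp ((fun x => φ x - φ 0) ∘ f) p μ :=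
    LipschitzWith.comp_memLp (K := K)
      (LipschitzWith.of_dist_le_mul fun x y => by simpa using hφ.dist_le_mul x y) (by simp) hf
  simpa [Function.comp_def, Pi.add_def] using hcentered.add (memLp_const (φ 0))

variable [InnerProductSpace ℝ E] [CompleteSpace E] [IsFiniteMeasure μ] {J : E → ℝ} {L : NNReal}

theorem integrable_comp_of_lipschitzWith_gradient (hJ : Differentiable ℝ J)
    (hLip : LipschitzWith L (∇ J)) {θ : Ω → E} (hθ : MemLp θ 2 μ) :
    Integrable (fun ω => J (θ ω)) μ := by
  have hlinear : Integrable (fun ω => inner ℝ (∇ J 0) (θ ω)) μ :=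
    integrable_inner_of_memLp_two (memLp_const _) hθ
  have hremainder : Integrable (fun ω => J (θ ω) - J 0 - inner ℝ (∇ J 0) (θ ω)) μ := by
    refine ((hθ.integrable_norm_pow two_ne_zero).const_mul (L / 2 : ℝ)).mono'
      (((hJ.continuous.comp_aestronglyMeasurable hθ.aestronglyMeasurable).sub
        aestronglyMeasurable_const).sub hlinear.aestronglyMeasurable) (.of_forall fun ω => ?_)
    simpa using abs_sub_sub_inner_gradient_le hJ hLip 0 (θ ω)
  exact ((hremainder.add hlinear).add (integrable_const (J 0))).congr
    (.of_forall fun ω => by simp only [Pi.add_apply]; ring)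

theorem integral_comp_sub_smul_le (hJ : Differentiable ℝ J) (hLip : LipschitzWith L (∇ J))
    {θ v : Ω → E} (hθ : MemLp θ 2 μ) (hv : MemLp v 2 μ) (η : ℝ) :
    ∫ ω, J (θ ω - η • v ω) ∂μ ≤ ∫ ω, J (θ ω) ∂μ - η * ∫ ω, inner ℝ (∇ J (θ ω)) (v ω) ∂μ
      + L / 2 * η ^ 2 * ∫ ω, ‖v ω‖ ^ 2 ∂μ := by
  have hJθ := integrable_comp_of_lipschitzWith_gradient hJ hLip hθ
  have hinner : Integrable (fun ω => inner ℝ (∇ J (θ ω)) (v ω)) μ :=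
    integrable_inner_of_memLp_two (memLp_lipschitzWith_comp hLip hθ) hv
  have hlinear : Integrable (fun ω => J (θ ω) - η * inner ℝ (∇ J (θ ω)) (v ω)) μ :=
    hJθ.sub (hinner.const_mul η)
  have hquadratic : Integrable (fun ω => L / 2 * η ^ 2 * ‖v ω‖ ^ 2) μ :=
    (hv.integrable_norm_pow two_ne_zero).const_mul _
  have hpointwise (ω : Ω) : J (θ ω - η • v ω) ≤
      J (θ ω) - η * inner ℝ (∇ J (θ ω)) (v ω) + L / 2 * η ^ 2 * ‖v ω‖ ^ 2 := by
    have hdescent := (abs_le.1 (abs_sub_sub_inner_gradient_le hJ hLip (θ ω) (θ ω - η • v ω))).2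
    rw [sub_sub_cancel_left, norm_neg, norm_smul, mul_pow, Real.norm_eq_abs, sq_abs,
      inner_neg_right, real_inner_smul_right] at hdescent
    linarith
  calc ∫ ω, J (θ ω - η • v ω) ∂μ
      ≤ ∫ ω, (J (θ ω) - η * inner ℝ (∇ J (θ ω)) (v ω) + L / 2 * η ^ 2 * ‖v ω‖ ^ 2) ∂μ :=
        integral_mono (integrable_comp_of_lipschitzWith_gradient hJ hLip (hθ.sub (hv.const_smul η)))
          (hlinear.add hquadratic) hpointwise
    _ = _ := by
      rw [integral_add hlinear hquadratic, integral_sub hJθ (hinner.const_mul η),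
        integral_const_mul, integral_const_mul]

end SquareIntegrable

section Independence

variable {Ω E : Type*} [MeasurableSpace Ω] {P : Measure Ω} [NormedAddCommGroup E]
  [InnerProductSpace ℝ E] [MeasurableSpace E] [BorelSpace E]

theorem integral_inner_of_indepFun [CompleteSpace E] {f g : Ω → E} (hfg : IndepFun f g P)
    (hf : Integrable f P) (hg : Integrable g P) :
    ∫ ω, inner ℝ (f ω) (g ω) ∂P = inner ℝ (∫ ω, f ω ∂P) (∫ ω, g ω ∂P) :=
  hfg.integral_bilin hf hg (innerSL ℝ)

theorem integral_norm_sum_sq_le_of_pairwise_indepFun [CompleteSpace E] [IsFiniteMeasure P]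
    {ι : Type*} [Fintype ι] {Y : ι → Ω → E} {c : E} {B : ℝ} (hY : ∀ i, MemLp (Y i) 2 P)
    (hindep : Pairwise fun i j => IndepFun (Y i) (Y j) P) (hmean : ∀ i, ∫ ω, Y i ω ∂P = c)
    (hsq : ∀ i, ∫ ω, ‖Y i ω‖ ^ 2 ∂P ≤ B) :
    ∫ ω, ‖∑ i, Y i ω‖ ^ 2 ∂P ≤
      Fintype.card ι * B + Fintype.card ι * (Fintype.card ι - 1) * ‖c‖ ^ 2 := by
  classical
  have hinner (i j : ι) : Integrable (fun ω => inner ℝ (Y i ω) (Y j ω)) P :=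
    integrable_inner_of_memLp_two (hY i) (hY j)
  have hpair (i j : ι) : ∫ ω, inner ℝ (Y i ω) (Y j ω) ∂P ≤
      ‖c‖ ^ 2 + if i = j then B - ‖c‖ ^ 2 else 0 := by
    rcases eq_or_ne i j with rfl | hij
    · simpa [real_inner_self_eq_norm_sq] using hsq i
    · rw [integral_inner_of_indepFun (hindep hij) ((hY i).integrable one_le_two)
        ((hY j).integrable one_le_two), hmean, hmean, real_inner_self_eq_norm_sq, if_neg hij,
        add_zero]
  calc ∫ ω, ‖∑ i, Y i ω‖ ^ 2 ∂P
      = ∑ i, ∑ j, ∫ ω, inner ℝ (Y i ω) (Y j ω) ∂P := by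
        simp_rw [← real_inner_self_eq_norm_sq, sum_inner, inner_sum]
        rw [integral_finsetSum _ fun i _ => integrable_finsetSum _ fun j _ => hinner i j]
        exact Finset.sum_congr rfl fun i _ => integral_finsetSum _ fun j _ => hinner i j
    _ ≤ ∑ i, ∑ j, (‖c‖ ^ 2 + if i = j then B - ‖c‖ ^ 2 else 0) := by gcongr; exact hpair _ _
    _ = _ := by
      simp only [Finset.sum_add_distrib, Finset.sum_const, Finset.sum_ite_eq, Finset.mem_univ,
        if_true, Finset.card_univ, nsmul_eq_mul]
      ring

theorem integral_norm_add_sq_of_indepFun [CompleteSpace E] [IsFiniteMeasure P] {f g : Ω → E}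
    (hfg : IndepFun f g P) (hf : MemLp f 2 P) (hg : MemLp g 2 P) (hmean : ∫ ω, g ω ∂P = 0) :
    ∫ ω, ‖f ω + g ω‖ ^ 2 ∂P = ∫ ω, ‖f ω‖ ^ 2 ∂P + ∫ ω, ‖g ω‖ ^ 2 ∂P := by
  have hcross : Integrable (fun ω => 2 * inner ℝ (f ω) (g ω)) P :=
    (integrable_inner_of_memLp_two hf hg).const_mul 2
  have hf_sq : Integrable (fun ω => ‖f ω‖ ^ 2) P := hf.integrable_norm_pow two_ne_zero
  have hg_sq : Integrable (fun ω => ‖g ω‖ ^ 2) P := hg.integrable_norm_pow two_ne_zero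
  have hf_cross : Integrable (fun ω => ‖f ω‖ ^ 2 + 2 * inner ℝ (f ω) (g ω)) P := hf_sq.add hcross
  simp_rw [norm_add_sq_real]
  rw [integral_add hf_cross hg_sq, integral_add hf_sq hcross, integral_const_mul,
    integral_inner_of_indepFun hfg (hf.integrable one_le_two) (hg.integrable one_le_two), hmean,
    inner_zero_right, mul_zero, add_zero]

end Independence

section IndependentScaling

variable {Ω E : Type*} [MeasurableSpace Ω] {P : Measure Ω} [NormedAddCommGroup E]
  [MeasurableSpace E] [BorelSpace E] {a : Ω → ℝ} {Z : Ω → E}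

theorem indepFun_sq_norm_sq (haZ : IndepFun a Z P) :
    IndepFun (fun ω => a ω ^ 2) (fun ω => ‖Z ω‖ ^ 2) P :=
  haZ.comp (φ := fun x : ℝ => x ^ 2) (ψ := fun z : E => ‖z‖ ^ 2) (by fun_prop) (by fun_prop)

variable [NormedSpace ℝ E]

theorem memLp_two_smul_of_indepFun (haZ : IndepFun a Z P) (ha : MemLp a 2 P)
    (hZ : MemLp Z 2 P) : MemLp (fun ω => a ω • Z ω) 2 P := by
  refine (memLp_two_iff_integrable_sq_norm
    (ha.aestronglyMeasurable.smul hZ.aestronglyMeasurable)).2 ?_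
  refine ((indepFun_sq_norm_sq haZ).integrable_mul ha.integrable_sq
    (hZ.integrable_norm_pow two_ne_zero)).congr (.of_forall fun ω => ?_)
  simp [norm_smul, mul_pow]

theorem integral_norm_smul_sq_of_indepFun (haZ : IndepFun a Z P) (ha : MemLp a 2 P)
    (hZ : MemLp Z 2 P) :
    ∫ ω, ‖a ω • Z ω‖ ^ 2 ∂P = (∫ ω, a ω ^ 2 ∂P) * ∫ ω, ‖Z ω‖ ^ 2 ∂P := by
  simp_rw [norm_smul, mul_pow, Real.norm_eq_abs, sq_abs]
  exact (indepFun_sq_norm_sq haZ).integral_fun_mul_eq_mul_integral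
    ha.integrable_sq.aestronglyMeasurable (hZ.integrable_norm_pow two_ne_zero).aestronglyMeasurable

end IndependentScaling

section Conditioning

variable {Ω : Type*} {m : MeasurableSpace Ω} [mΩ : MeasurableSpace Ω] {μ : Measure Ω}

theorem integral_inner_condExp_self {E : Type*} [NormedAddCommGroup E] [InnerProductSpace ℝ E]
    [CompleteSpace E] [IsFiniteMeasure μ] (hm : m ≤ mΩ) {v : Ω → E} (hv : MemLp v 2 μ) :
    ∫ ω, inner ℝ (μ[v | m] ω) (v ω) ∂μ = ∫ ω, ‖μ[v | m] ω‖ ^ 2 ∂μ := by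
  have hpull : μ[fun ω => inner ℝ (μ[v | m] ω) (v ω) | m] =ᵐ[μ]
      fun ω => inner ℝ (μ[v | m] ω) (μ[v | m] ω) :=
    condExp_bilin_of_stronglyMeasurable_left (innerSL ℝ) stronglyMeasurable_condExp
      (integrable_inner_of_memLp_two (hv.condExp one_le_two) hv) (hv.integrable one_le_two)
  rw [← integral_condExp hm, integral_congr_ae hpull]
  simp only [real_inner_self_eq_norm_sq]

theorem integral_inner_of_condExp_eq_smul {E : Type*} [NormedAddCommGroup E]
    [InnerProductSpace ℝ E] [CompleteSpace E] [IsFiniteMeasure μ] (hm : m ≤ mΩ) {v g : Ω → E}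
    {c : ℝ} (hc : c ≠ 0) (hv : MemLp v 2 μ) (hvg : μ[v | m] =ᵐ[μ] fun ω => c • g ω) :
    ∫ ω, inner ℝ (g ω) (v ω) ∂μ = c * ∫ ω, ‖g ω‖ ^ 2 ∂μ := by
  have hself := integral_inner_condExp_self hm hv
  have hleft : ∫ ω, inner ℝ (μ[v | m] ω) (v ω) ∂μ = c * ∫ ω, inner ℝ (g ω) (v ω) ∂μ := by
    rw [← integral_const_mul]
    exact integral_congr_ae (hvg.mono fun ω hω => by simp only [hω, real_inner_smul_left])
  have hright : ∫ ω, ‖μ[v | m] ω‖ ^ 2 ∂μ = c * (c * ∫ ω, ‖g ω‖ ^ 2 ∂μ) := by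
    rw [← mul_assoc, ← integral_const_mul]
    exact integral_congr_ae (hvg.mono fun ω hω => by
      simp only [hω, norm_smul, mul_pow, Real.norm_eq_abs, sq_abs, ← sq])
  exact mul_left_cancel₀ hc (hleft.symm.trans (hself.trans hright))

variable [StandardBorelSpace Ω]

theorem ae_integral_condExpKernel_eq_of_indep {β F : Type*} [mβ : MeasurableSpace β]
    [NormedAddCommGroup F] [NormedSpace ℝ F] [CompleteSpace F] [IsProbabilityMeasure μ]
    (hm : m ≤ mΩ) {f : Ω → β} (hf : AEMeasurable f μ) (hindep : Indep (mβ.comap f) m μ)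
    {φ : β → F} (hφ : StronglyMeasurable φ) (hint : Integrable (fun ω => φ (f ω)) μ) :
    ∀ᵐ ω ∂μ, ∫ y, φ (f y) ∂condExpKernel μ m ω = ∫ y, φ (f y) ∂μ := by
  have hconst : (fun _ => ∫ y, φ (f y) ∂μ) =ᵐ[μ] μ[fun ω => φ (f ω) | m] := by
    refine ae_eq_condExp_of_forall_setIntegral_eq hm hint (fun _ _ _ => integrableOn_const)
      (fun s hs _ => ?_) aestronglyMeasurable_const
    rw [setIntegral_const,
      hindep.symm.setIntegral_eq_smul hm hf hs hφ.aestronglyMeasurable]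
  filter_upwards [hconst, condExp_ae_eq_integral_condExpKernel hm hint] with ω h₁ h₂
  rw [← h₂, ← h₁]

theorem ae_memLp_two_condExpKernel {F : Type*} [NormedAddCommGroup F] [IsFiniteMeasure μ]
    {f : Ω → F} (hf : MemLp f 2 μ) : ∀ᵐ ω ∂μ, MemLp f 2 (condExpKernel μ m ω) := by
  filter_upwards [(hf.integrable one_le_two).condExpKernel_ae (m := m),
    (hf.integrable_norm_pow two_ne_zero).condExpKernel_ae (m := m)] with ω hint hsq
  exact (memLp_two_iff_integrable_sq_norm hint.aestronglyMeasurable).2 hsq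

theorem ae_trim_ae_condExpKernel [IsFiniteMeasure μ] (hm : m ≤ mΩ) {p : Ω → Prop}
    (hp : ∀ᵐ y ∂μ, p y) : ∀ᵐ ω ∂μ.trim hm, ∀ᵐ y ∂condExpKernel μ m ω, p y :=
  Measure.ae_ae_of_ae_comp (by rwa [condExpKernel_comp_trim])

theorem lintegral_lintegral_condExpKernel [IsFiniteMeasure μ] (hm : m ≤ mΩ) {F : Ω → ENNReal}
    (hF : AEMeasurable F μ) :
    ∫⁻ ω, ∫⁻ y, F y ∂condExpKernel μ m ω ∂μ = ∫⁻ y, F y ∂μ :=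
  calc ∫⁻ ω, ∫⁻ y, F y ∂condExpKernel μ m ω ∂μ
      = ∫⁻ ω, ∫⁻ y, hF.mk F y ∂condExpKernel μ m ω ∂μ :=
        lintegral_congr_ae <| (ae_of_ae_trim hm (ae_trim_ae_condExpKernel hm hF.ae_eq_mk)).mono
          fun _ hω => lintegral_congr_ae hω
    _ = ∫⁻ ω, ∫⁻ y, hF.mk F y ∂condExpKernel μ m ω ∂μ.trim hm :=
        (lintegral_trim hm hF.measurable_mk.lintegral_kernel).symm
    _ = ∫⁻ y, hF.mk F y ∂μ := by
        rw [← Measure.lintegral_bind (Kernel.aemeasurable _) hF.measurable_mk.aemeasurable,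
          condExpKernel_comp_trim]
    _ = ∫⁻ y, F y ∂μ := (lintegral_congr_ae hF.ae_eq_mk).symm

theorem integrable_of_ae_integral_norm_condExpKernel_le [IsFiniteMeasure μ] {F : Type*}
    [NormedAddCommGroup F] (hm : m ≤ mΩ) {f : Ω → F} (hf : AEStronglyMeasurable f μ)
    (hint : ∀ᵐ ω ∂μ, Integrable f (condExpKernel μ m ω)) {C : Ω → ℝ} (hC : Integrable C μ)
    (hle : ∀ᵐ ω ∂μ, ∫ y, ‖f y‖ ∂condExpKernel μ m ω ≤ C ω) : Integrable f μ := by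
  refine ⟨hf, lt_of_le_of_lt ?_ hC.2⟩
  rw [← lintegral_lintegral_condExpKernel hm hf.enorm]
  refine lintegral_mono_ae ?_
  filter_upwards [hint, hle] with ω hint_ω hle_ω
  rw [← ofReal_integral_norm_eq_lintegral_enorm hint_ω]
  exact (ENNReal.ofReal_le_ofReal hle_ω).trans (Real.ofReal_le_enorm _)

theorem ae_indepFun_condExpKernel [IsFiniteMeasure μ] {β β' : Type*} [MeasurableSpace β]
    [MeasurableSpace β'] [MeasurableSpace.CountablyGenerated (β × β')] (hm : m ≤ mΩ) {f : Ω → β}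
    {g : Ω → β'} (hf : AEMeasurable f μ) (hg : AEMeasurable g μ)
    (hfg : CondIndepFun m hm f g μ) : ∀ᵐ ω ∂μ, IndepFun f g (condExpKernel μ m ω) := by
  have hf_mk := ae_trim_ae_condExpKernel hm hf.ae_eq_mk
  have hg_mk := ae_trim_ae_condExpKernel hm hg.ae_eq_mk
  have hlaw := (condIndepFun_iff_map_prod_eq_prod_map_map hf.measurable_mk hg.measurable_mk).1
    (Kernel.IndepFun.congr' hfg hf_mk hg_mk)
  filter_upwards [ae_of_ae_trim hm hlaw, ae_of_ae_trim hm hf_mk, ae_of_ae_trim hm hg_mk]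
    with ω hω hfω hgω
  refine IndepFun.congr ?_ (Filter.EventuallyEq.symm hfω) (Filter.EventuallyEq.symm hgω)
  rwa [indepFun_iff_map_prod_eq_prod_map_map hf.measurable_mk.aemeasurable
    hg.measurable_mk.aemeasurable, ← Kernel.map_apply _ hf.measurable_mk,
    ← Kernel.map_apply _ hg.measurable_mk, ← Kernel.prod_apply,
    ← Kernel.map_apply _ (hf.measurable_mk.prodMk hg.measurable_mk)]

theorem ae_indepFun_comp_of_iCondIndepFun [IsFiniteMeasure μ] {ι : Type*} {γ : ι → Type*}
    [∀ q, MeasurableSpace (γ q)] {β β' : Type*} [MeasurableSpace β] [MeasurableSpace β']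
    [MeasurableSpace.CountablyGenerated (β × β')] (hm : m ≤ mΩ) {f : ∀ q, Ω → γ q}
    (hf : ∀ q, AEMeasurable (f q) μ) (hindep : iCondIndepFun m hm f μ) {S T : Finset ι}
    (hST : Disjoint S T) {φ : (∀ q : S, γ q) → β} {ψ : (∀ q : T, γ q) → β'}
    (hφ : Measurable φ) (hψ : Measurable ψ) :
    ∀ᵐ ω ∂μ, IndepFun (fun y => φ fun q => f q y) (fun y => ψ fun q => f q y)
      (condExpKernel μ m ω) := by
  have hmeas (S : Finset ι) : AEMeasurable (fun y (q : S) => f q y) μ :=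
    aemeasurable_pi_lambda _ fun q => hf q
  refine ae_indepFun_condExpKernel hm (hφ.comp_aemeasurable (hmeas S))
    (hψ.comp_aemeasurable (hmeas T)) ?_
  exact Kernel.IndepFun.comp (Kernel.iIndepFun.indepFun_finset₀ S T hST hindep
    fun q => by rw [condExpKernel_comp_trim]; exact hf q) hφ hψ

end Conditioning

/-- The minibatch gradient estimate `(1/M) ∑ⱼ Xⱼ` of one agent. -/
noncomputable def batchMean {Ω E : Type*} [AddCommGroup E] [Module ℝ E] {M : ℕ}
    (X : Fin M → Ω → E) : Ω → E :=
  fun ω => (1 / (M : ℝ)) • ∑ j, X j ω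

/-- The signal `∑ᵢ hᵢ · ((1/M) ∑ⱼ Xᵢⱼ) + n` that the server receives over the air in one round. -/
noncomputable def otaAggregate {Ω E : Type*} [AddCommGroup E] [Module ℝ E] {N M : ℕ}
    (h : Fin N → Ω → ℝ) (X : Fin N → Fin M → Ω → E) (n : Ω → E) : Ω → E :=
  fun ω => (∑ i, h i ω • batchMean (X i) ω) + n ω

theorem aestronglyMeasurable_otaAggregate {Ω E : Type*} [MeasurableSpace Ω] {μ : Measure Ω}
    [NormedAddCommGroup E] [NormedSpace ℝ E] {N M : ℕ} {h : Fin N → Ω → ℝ}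
    {X : Fin N → Fin M → Ω → E} {n : Ω → E} (hh : ∀ i, AEStronglyMeasurable (h i) μ)
    (hX : ∀ i j, AEStronglyMeasurable (X i j) μ) (hn : AEStronglyMeasurable n μ) :
    AEStronglyMeasurable (otaAggregate h X n) μ :=
  (Finset.aestronglyMeasurable_fun_sum _ fun i _ => (hh i).smul
    ((Finset.aestronglyMeasurable_fun_sum _ fun j _ => hX i j).const_smul _)).add hn

/-- One communication round of the over-the-air model under the law `P`, with true gradient `g`.
The channel gains `h` have mean `m_h` and second moment at most `σ`, the samples `X` have mean `g`
and second moment at most `V ^ 2`, and the noise `n` is centered with second moment at most `s`.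
Mutual independence is replaced by the four independence relations that the second moment of the
aggregate depends on. -/
structure IsOverTheAirRound {Ω E : Type*} [MeasurableSpace Ω] [NormedAddCommGroup E]
    [InnerProductSpace ℝ E] [MeasurableSpace E] {N M : ℕ} (P : Measure Ω) (h : Fin N → Ω → ℝ)
    (X : Fin N → Fin M → Ω → E) (n : Ω → E) (m_h σ V s : ℝ) (g : E) : Prop where
  memLp_gain : ∀ i, MemLp (h i) 2 P
  memLp_sample : ∀ i j, MemLp (X i j) 2 P
  memLp_noise : MemLp n 2 P
  indepFun_samples : ∀ i, Pairwise fun j j' => IndepFun (X i j) (X i j') P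
  indepFun_gain_batch : ∀ i, IndepFun (h i) (fun ω j => X i j ω) P
  indepFun_agents : Pairwise fun i i' =>
    IndepFun (fun ω => (h i ω, fun j => X i j ω)) (fun ω => (h i' ω, fun j => X i' j ω)) P
  indepFun_agents_noise : IndepFun (fun ω i => (h i ω, fun j => X i j ω)) n P
  integral_gain : ∀ i, ∫ ω, h i ω ∂P = m_h
  integral_gain_sq_le : ∀ i, ∫ ω, h i ω ^ 2 ∂P ≤ σ
  integral_sample : ∀ i j, ∫ ω, X i j ω ∂P = g
  integral_norm_sample_sq_le : ∀ i j, ∫ ω, ‖X i j ω‖ ^ 2 ∂P ≤ V ^ 2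
  integral_noise : ∫ ω, n ω ∂P = 0
  integral_norm_noise_sq_le : ∫ ω, ‖n ω‖ ^ 2 ∂P ≤ s

namespace IsOverTheAirRound

variable {Ω E : Type*} [MeasurableSpace Ω] [NormedAddCommGroup E] [InnerProductSpace ℝ E]
  [MeasurableSpace E] {N M : ℕ} {P : Measure Ω} {h : Fin N → Ω → ℝ} {X : Fin N → Fin M → Ω → E}
  {n : Ω → E} {m_h σ V s : ℝ} {g : E}

theorem memLp_batchMean (hR : IsOverTheAirRound P h X n m_h σ V s g) (i : Fin N) :
    MemLp (batchMean (X i)) 2 P :=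
  (memLp_finsetSum _ fun j _ => hR.memLp_sample i j).const_smul _

theorem integral_batchMean [IsFiniteMeasure P] (hR : IsOverTheAirRound P h X n m_h σ V s g)
    (hM : 0 < M) (i : Fin N) : ∫ ω, batchMean (X i) ω ∂P = g := by
  have hM' : (M : ℝ) ≠ 0 := by positivity
  simp only [batchMean]
  rw [integral_smul, integral_finsetSum _ fun j _ => (hR.memLp_sample i j).integrable one_le_two]
  simp only [hR.integral_sample, Finset.sum_const, Finset.card_univ, Fintype.card_fin]
  rw [← Nat.cast_smul_eq_nsmul ℝ, smul_smul, one_div_mul_cancel hM', one_smul]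

theorem integral_norm_batchMean_sq_le [CompleteSpace E] [BorelSpace E] [IsFiniteMeasure P]
    (hR : IsOverTheAirRound P h X n m_h σ V s g) (i : Fin N) :
    ∫ ω, ‖batchMean (X i) ω‖ ^ 2 ∂P ≤ (V ^ 2 + (M - 1) * ‖g‖ ^ 2) / M := by
  have hsum := integral_norm_sum_sq_le_of_pairwise_indepFun (hR.memLp_sample i)
    (hR.indepFun_samples i) (hR.integral_sample i) (hR.integral_norm_sample_sq_le i)
  rw [Fintype.card_fin] at hsum
  simp only [batchMean, norm_smul, mul_pow, Real.norm_eq_abs, sq_abs]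
  rw [integral_const_mul]
  calc (1 / (M : ℝ)) ^ 2 * ∫ ω, ‖∑ j, X i j ω‖ ^ 2 ∂P
      ≤ (1 / (M : ℝ)) ^ 2 * (M * V ^ 2 + M * (M - 1) * ‖g‖ ^ 2) := by gcongr
    _ = (V ^ 2 + (M - 1) * ‖g‖ ^ 2) / M := by field_simp

variable [BorelSpace E] [SecondCountableTopology E]

theorem indepFun_gain_batchMean (hR : IsOverTheAirRound P h X n m_h σ V s g) (i : Fin N) :
    IndepFun (h i) (batchMean (X i)) P :=
  (hR.indepFun_gain_batch i).comp measurable_id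
    (ψ := fun x : Fin M → E => (1 / (M : ℝ)) • ∑ j, x j) (by fun_prop)

theorem memLp_gain_smul_batchMean (hR : IsOverTheAirRound P h X n m_h σ V s g) (i : Fin N) :
    MemLp (fun ω => h i ω • batchMean (X i) ω) 2 P :=
  memLp_two_smul_of_indepFun (hR.indepFun_gain_batchMean i) (hR.memLp_gain i)
    (hR.memLp_batchMean i)

theorem memLp_sum_gain_smul_batchMean (hR : IsOverTheAirRound P h X n m_h σ V s g) :
    MemLp (fun ω => ∑ i, h i ω • batchMean (X i) ω) 2 P :=
  memLp_finsetSum _ fun i _ => hR.memLp_gain_smul_batchMean i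

theorem memLp_otaAggregate (hR : IsOverTheAirRound P h X n m_h σ V s g) :
    MemLp (otaAggregate h X n) 2 P :=
  hR.memLp_sum_gain_smul_batchMean.add hR.memLp_noise

theorem pairwise_indepFun_gain_smul_batchMean (hR : IsOverTheAirRound P h X n m_h σ V s g) :
    Pairwise fun i i' =>
      IndepFun (fun ω => h i ω • batchMean (X i) ω) (fun ω => h i' ω • batchMean (X i') ω) P := by
  have hscaled : Measurable fun p : ℝ × (Fin M → E) => p.1 • (1 / (M : ℝ)) • ∑ j, p.2 j := by
    fun_prop
  exact fun i i' hii' => (hR.indepFun_agents hii').comp hscaled hscaled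

theorem indepFun_sum_gain_smul_batchMean_noise (hR : IsOverTheAirRound P h X n m_h σ V s g) :
    IndepFun (fun ω => ∑ i, h i ω • batchMean (X i) ω) n P :=
  hR.indepFun_agents_noise.comp (ψ := id)
    (φ := fun p : Fin N → ℝ × (Fin M → E) => ∑ i, (p i).1 • (1 / (M : ℝ)) • ∑ j, (p i).2 j)
    (by fun_prop) measurable_id

variable [IsFiniteMeasure P]

theorem integral_gain_smul_batchMean (hR : IsOverTheAirRound P h X n m_h σ V s g) (hM : 0 < M)
    (i : Fin N) : ∫ ω, h i ω • batchMean (X i) ω ∂P = m_h • g := by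
  rw [(hR.indepFun_gain_batchMean i).integral_fun_smul_eq_smul_integral
    (hR.memLp_gain i).aestronglyMeasurable (hR.memLp_batchMean i).aestronglyMeasurable,
    hR.integral_gain, hR.integral_batchMean hM]

theorem integral_otaAggregate (hR : IsOverTheAirRound P h X n m_h σ V s g) (hM : 0 < M) :
    ∫ ω, otaAggregate h X n ω ∂P = (N * m_h) • g := by
  simp only [otaAggregate]
  rw [integral_add (hR.memLp_sum_gain_smul_batchMean.integrable one_le_two)
    (hR.memLp_noise.integrable one_le_two), hR.integral_noise, add_zero,
    integral_finsetSum _ fun i _ => (hR.memLp_gain_smul_batchMean i).integrable one_le_two]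
  simp only [hR.integral_gain_smul_batchMean hM, Finset.sum_const, Finset.card_univ,
    Fintype.card_fin]
  rw [← Nat.cast_smul_eq_nsmul ℝ, smul_smul]

variable [CompleteSpace E]

theorem integral_norm_gain_smul_batchMean_sq_le (hR : IsOverTheAirRound P h X n m_h σ V s g)
    (i : Fin N) :
    ∫ ω, ‖h i ω • batchMean (X i) ω‖ ^ 2 ∂P ≤ σ * ((V ^ 2 + (M - 1) * ‖g‖ ^ 2) / M) := by
  rw [integral_norm_smul_sq_of_indepFun (hR.indepFun_gain_batchMean i) (hR.memLp_gain i)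
    (hR.memLp_batchMean i)]
  exact mul_le_mul (hR.integral_gain_sq_le i) (hR.integral_norm_batchMean_sq_le i)
    (integral_nonneg fun _ => by positivity)
    ((integral_nonneg fun _ => by positivity).trans (hR.integral_gain_sq_le i))

theorem integral_norm_otaAggregate_sq_le (hR : IsOverTheAirRound P h X n m_h σ V s g)
    (hM : 0 < M) :
    ∫ ω, ‖otaAggregate h X n ω‖ ^ 2 ∂P ≤
      N / M * (σ * V ^ 2 + ((M - 1) * σ + M * (N - 1) * m_h ^ 2) * ‖g‖ ^ 2) + s := by
  have hsignal := integral_norm_sum_sq_le_of_pairwise_indepFun hR.memLp_gain_smul_batchMean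
    hR.pairwise_indepFun_gain_smul_batchMean (hR.integral_gain_smul_batchMean hM)
    hR.integral_norm_gain_smul_batchMean_sq_le
  rw [Fintype.card_fin, norm_smul, mul_pow, Real.norm_eq_abs, sq_abs] at hsignal
  have hsplit : ∫ ω, ‖otaAggregate h X n ω‖ ^ 2 ∂P =
      ∫ ω, ‖∑ i, h i ω • batchMean (X i) ω‖ ^ 2 ∂P + ∫ ω, ‖n ω‖ ^ 2 ∂P :=
    integral_norm_add_sq_of_indepFun hR.indepFun_sum_gain_smul_batchMean_noise
      hR.memLp_sum_gain_smul_batchMean hR.memLp_noise hR.integral_noise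
  calc ∫ ω, ‖otaAggregate h X n ω‖ ^ 2 ∂P
      ≤ (N * (σ * ((V ^ 2 + (M - 1) * ‖g‖ ^ 2) / M)) + N * (N - 1) * (m_h ^ 2 * ‖g‖ ^ 2)) + s :=
        hsplit ▸ add_le_add hsignal hR.integral_norm_noise_sq_le
    _ = _ := by field_simp; ring

end IsOverTheAirRound

section ConditionalRound

variable {Ω E : Type*} {m : MeasurableSpace Ω} [mΩ : MeasurableSpace Ω] [StandardBorelSpace Ω]
  {μ : Measure Ω} [NormedAddCommGroup E] [InnerProductSpace ℝ E] [CompleteSpace E]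
  [MeasurableSpace E] [BorelSpace E] [SecondCountableTopology E] {N M : ℕ}
  {h : Fin N → Ω → ℝ} {X : Fin N → Fin M → Ω → E} {n g : Ω → E} {m_h σ V s : ℝ}

theorem memLp_otaAggregate_of_ae_isOverTheAirRound [IsFiniteMeasure μ] (hm : m ≤ mΩ) (hM : 0 < M)
    (hv : AEStronglyMeasurable (otaAggregate h X n) μ) (hg : MemLp g 2 μ)
    (hround : ∀ᵐ ω ∂μ, IsOverTheAirRound (condExpKernel μ m ω) h X n m_h σ V s (g ω)) :
    MemLp (otaAggregate h X n) 2 μ := by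
  have hbound : Integrable (fun ω => N / M * (σ * V ^ 2 +
      ((M - 1) * σ + M * (N - 1) * m_h ^ 2) * ‖g ω‖ ^ 2) + s) μ :=
    (((integrable_const _).add ((hg.integrable_norm_pow two_ne_zero).const_mul _)).const_mul
      _).add (integrable_const _)
  refine (memLp_two_iff_integrable_sq_norm hv).2 <|
    integrable_of_ae_integral_norm_condExpKernel_le hm (hv.norm.pow 2)
      (hround.mono fun ω hω => hω.memLp_otaAggregate.integrable_norm_pow two_ne_zero) hbound
      (hround.mono fun ω hω => ?_)
  simpa only [norm_pow, norm_norm] using hω.integral_norm_otaAggregate_sq_le hM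

theorem condExp_otaAggregate [IsFiniteMeasure μ] (hm : m ≤ mΩ) (hM : 0 < M)
    (hv : Integrable (otaAggregate h X n) μ)
    (hround : ∀ᵐ ω ∂μ, IsOverTheAirRound (condExpKernel μ m ω) h X n m_h σ V s (g ω)) :
    μ[otaAggregate h X n | m] =ᵐ[μ] fun ω => (N * m_h) • g ω := by
  filter_upwards [condExp_ae_eq_integral_condExpKernel hm hv, hround] with ω hcondExp hω
  rw [hcondExp, hω.integral_otaAggregate hM]

variable [IsProbabilityMeasure μ]

theorem integral_norm_otaAggregate_sq_le_of_ae_isOverTheAirRound (hm : m ≤ mΩ) (hM : 0 < M)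
    (hv : MemLp (otaAggregate h X n) 2 μ) (hg : MemLp g 2 μ)
    (hround : ∀ᵐ ω ∂μ, IsOverTheAirRound (condExpKernel μ m ω) h X n m_h σ V s (g ω)) :
    ∫ ω, ‖otaAggregate h X n ω‖ ^ 2 ∂μ ≤ N / M * (σ * V ^ 2 +
      ((M - 1) * σ + M * (N - 1) * m_h ^ 2) * ∫ ω, ‖g ω‖ ^ 2 ∂μ) + s := by
  have hgrad : Integrable (fun ω => ((M - 1) * σ + M * (N - 1) * m_h ^ 2) * ‖g ω‖ ^ 2) μ :=
    (hg.integrable_norm_pow two_ne_zero).const_mul _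
  have hsignal : Integrable (fun ω => N / M * (σ * V ^ 2 +
      ((M - 1) * σ + M * (N - 1) * m_h ^ 2) * ‖g ω‖ ^ 2)) μ :=
    ((integrable_const _).add hgrad).const_mul _
  calc ∫ ω, ‖otaAggregate h X n ω‖ ^ 2 ∂μ
      = ∫ ω, μ[fun ω => ‖otaAggregate h X n ω‖ ^ 2 | m] ω ∂μ := (integral_condExp hm).symm
    _ ≤ ∫ ω, (N / M * (σ * V ^ 2 +
          ((M - 1) * σ + M * (N - 1) * m_h ^ 2) * ‖g ω‖ ^ 2) + s) ∂μ := by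
        refine integral_mono_ae integrable_condExp (hsignal.add (integrable_const s)) ?_
        filter_upwards [condExp_ae_eq_integral_condExpKernel hm
          (hv.integrable_norm_pow two_ne_zero), hround] with ω hcondExp hω
        exact hcondExp ▸ hω.integral_norm_otaAggregate_sq_le hM
    _ = _ := by
        rw [integral_add hsignal (integrable_const s), integral_const_mul,
          integral_add (integrable_const _) hgrad, integral_const_mul ((M - 1) * σ + _)]
        simp only [integral_const, probReal_univ, smul_eq_mul, one_mul]

theorem integral_comp_sub_smul_otaAggregate_sub_le (hm : m ≤ mΩ) (hN : 0 < N) (hM : 0 < M)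
    (hm_h : 0 < m_h) {α : ℝ} (hα : 0 ≤ α) {L : NNReal} (hαL : α * (m_h * L) ≤ 1) {J : E → ℝ}
    (hJ : Differentiable ℝ J) (hLip : LipschitzWith L (∇ J)) {θ : Ω → E} (hθ : MemLp θ 2 μ)
    (hv : MemLp (otaAggregate h X n) 2 μ) (hround : ∀ᵐ ω ∂μ,
      IsOverTheAirRound (condExpKernel μ m ω) h X n m_h σ V s (∇ J (θ ω))) :
    ∫ ω, J (θ ω - (α / N) • otaAggregate h X n ω) ∂μ - ∫ ω, J (θ ω) ∂μ ≤
      α * ((M - 1) * σ - M * (N + 1) * m_h ^ 2) / (2 * M * N * m_h) * ∫ ω, ‖∇ J (θ ω)‖ ^ 2 ∂μ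
        + (α * s / (2 * m_h * N ^ 2) + α * σ * V ^ 2 / (2 * M * N * m_h)) := by
  have hgrad : MemLp (fun ω => ∇ J (θ ω)) 2 μ := memLp_lipschitzWith_comp hLip hθ
  have hdescent := integral_comp_sub_smul_le hJ hLip hθ hv (α / N)
  rw [integral_inner_of_condExp_eq_smul hm (by positivity) hv
    (condExp_otaAggregate hm hM (hv.integrable one_le_two) hround)] at hdescent
  have hquadratic : L / 2 * (α / N) ^ 2 * ∫ ω, ‖otaAggregate h X n ω‖ ^ 2 ∂μ ≤
      α / (2 * m_h * N ^ 2) * (N / M * (σ * V ^ 2 +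
        ((M - 1) * σ + M * (N - 1) * m_h ^ 2) * ∫ ω, ‖∇ J (θ ω)‖ ^ 2 ∂μ) + s) := by
    refine mul_le_mul ?_ (integral_norm_otaAggregate_sq_le_of_ae_isOverTheAirRound hm hM hv hgrad
      hround) (integral_nonneg fun _ => by positivity) (by positivity)
    calc L / 2 * (α / N) ^ 2 = α / (2 * m_h * N ^ 2) * (α * (m_h * L)) := by field_simp
      _ ≤ α / (2 * m_h * N ^ 2) := mul_le_of_le_one_right (by positivity) hαL
  calc ∫ ω, J (θ ω - (α / N) • otaAggregate h X n ω) ∂μ - ∫ ω, J (θ ω) ∂μ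
      ≤ -(α / N * (N * m_h * ∫ ω, ‖∇ J (θ ω)‖ ^ 2 ∂μ)) +
          α / (2 * m_h * N ^ 2) * (N / M * (σ * V ^ 2 +
            ((M - 1) * σ + M * (N - 1) * m_h ^ 2) * ∫ ω, ‖∇ J (θ ω)‖ ^ 2 ∂μ) + s) := by
        linarith
    _ = _ := by field_simp; ring

end ConditionalRound

section OtaFam

variable {d N M : ℕ} {Ω : Type*} {m : MeasurableSpace Ω} [mΩ : MeasurableSpace Ω]
  {μ : Measure Ω} {h : Fin N → Ω → ℝ} {X : Fin N → Fin M → Ω → EuclideanSpace ℝ (Fin d)}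
  {n : Ω → EuclideanSpace ℝ (Fin d)}

theorem aemeasurable_otaFam (hh : ∀ i, AEMeasurable (h i) μ) (hX : ∀ i j, AEMeasurable (X i j) μ)
    (hn : AEMeasurable n μ) : ∀ q, AEMeasurable (otaFam h X n q) μ
  | .inl i => (hh i).prodMk aemeasurable_const
  | .inr (.inl (i, j)) => aemeasurable_const.prodMk (hX i j)
  | .inr (.inr _) => aemeasurable_const.prodMk hn

/-- The members of `otaFam` that belong to agent `i`: its gain and its samples. -/
def otaAgentIndices (M : ℕ) {N : ℕ} (i : Fin N) : Finset (Fin N ⊕ (Fin N × Fin M) ⊕ Unit) :=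
  {.inl i} ∪ Finset.univ.image fun j => .inr (.inl (i, j))

variable [StandardBorelSpace Ω] [IsFiniteMeasure μ]

theorem ae_indepFun_samples (hm : m ≤ mΩ) (hfam : ∀ q, AEMeasurable (otaFam h X n q) μ)
    (hindep : iCondIndepFun m hm (otaFam h X n) μ) :
    ∀ᵐ ω ∂μ, ∀ i, Pairwise fun j j' => IndepFun (X i j) (X i j') (condExpKernel μ m ω) := by
  refine ae_all_iff.2 fun i => ae_all_iff.2 fun j => ae_all_iff.2 fun j' =>
    ae_all_iff.2 fun hne => ?_
  exact ae_indepFun_comp_of_iCondIndepFun hm hfam hindep (S := {.inr (.inl (i, j))})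
    (T := {.inr (.inl (i, j'))}) (by simpa using hne)
    (φ := fun x => (x ⟨.inr (.inl (i, j)), by simp⟩).2)
    (ψ := fun x => (x ⟨.inr (.inl (i, j')), by simp⟩).2) (by fun_prop) (by fun_prop)

theorem ae_indepFun_gain_batch (hm : m ≤ mΩ) (hfam : ∀ q, AEMeasurable (otaFam h X n q) μ)
    (hindep : iCondIndepFun m hm (otaFam h X n) μ) :
    ∀ᵐ ω ∂μ, ∀ i, IndepFun (h i) (fun y j => X i j y) (condExpKernel μ m ω) :=
  ae_all_iff.2 fun i => ae_indepFun_comp_of_iCondIndepFun hm hfam hindep (S := {.inl i})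
    (T := Finset.univ.image fun j => .inr (.inl (i, j))) (by simp)
    (φ := fun x => (x ⟨.inl i, by simp⟩).1)
    (ψ := fun x j => (x ⟨.inr (.inl (i, j)), by simp⟩).2) (by fun_prop) (by fun_prop)

theorem ae_indepFun_agents (hm : m ≤ mΩ) (hfam : ∀ q, AEMeasurable (otaFam h X n q) μ)
    (hindep : iCondIndepFun m hm (otaFam h X n) μ) :
    ∀ᵐ ω ∂μ, Pairwise fun i i' =>
    IndepFun (fun y => (h i y, fun j => X i j y)) (fun y => (h i' y, fun j => X i' j y))
      (condExpKernel μ m ω) := by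
  refine ae_all_iff.2 fun i => ae_all_iff.2 fun i' => ae_all_iff.2 fun hne => ?_
  exact ae_indepFun_comp_of_iCondIndepFun hm hfam hindep (S := otaAgentIndices M i)
    (T := otaAgentIndices M i')
    (by simp [otaAgentIndices, Finset.disjoint_left, hne, hne.symm])
    (φ := fun x => ((x ⟨.inl i, by simp [otaAgentIndices]⟩).1,
      fun j => (x ⟨.inr (.inl (i, j)), by simp [otaAgentIndices]⟩).2))
    (ψ := fun x => ((x ⟨.inl i', by simp [otaAgentIndices]⟩).1,
      fun j => (x ⟨.inr (.inl (i', j)), by simp [otaAgentIndices]⟩).2))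
    (by fun_prop) (by fun_prop)

theorem ae_indepFun_agents_noise (hm : m ≤ mΩ) (hfam : ∀ q, AEMeasurable (otaFam h X n q) μ)
    (hindep : iCondIndepFun m hm (otaFam h X n) μ) :
    ∀ᵐ ω ∂μ, IndepFun (fun y i => (h i y, fun j => X i j y)) n (condExpKernel μ m ω) :=
  ae_indepFun_comp_of_iCondIndepFun hm hfam hindep
    (S := Finset.univ.erase (.inr (.inr ()))) (T := {.inr (.inr ())}) (by simp)
    (φ := fun x i => ((x ⟨.inl i, by simp⟩).1, fun j => (x ⟨.inr (.inl (i, j)), by simp⟩).2))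
    (ψ := fun x => (x ⟨.inr (.inr ()), by simp⟩).2) (by fun_prop) (by fun_prop)

end OtaFam

theorem ae_isOverTheAirRound_condExpKernel {d N M : ℕ} {Ω : Type*} {m : MeasurableSpace Ω}
    [mΩ : MeasurableSpace Ω] [StandardBorelSpace Ω] {μ : Measure Ω} [IsProbabilityMeasure μ]
    {h : Fin N → Ω → ℝ} {X : Fin N → Fin M → Ω → EuclideanSpace ℝ (Fin d)}
    {n g : Ω → EuclideanSpace ℝ (Fin d)} {m_h σ V s : ℝ} (hm : m ≤ mΩ)
    (hh : ∀ i, MemLp (h i) 2 μ) (hX : ∀ i j, MemLp (X i j) 2 μ) (hn : MemLp n 2 μ)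
    (hindep : iCondIndepFun m hm (otaFam h X n) μ)
    (hhm : ∀ i, Indep (MeasurableSpace.comap (h i) inferInstance) m μ)
    (hnm : Indep (MeasurableSpace.comap n inferInstance) m μ)
    (hEh : ∀ i, ∫ ω, h i ω ∂μ = m_h) (hEh2 : ∀ i, ∫ ω, h i ω ^ 2 ∂μ ≤ σ)
    (hEn : ∫ ω, n ω ∂μ = 0) (hVn : ∫ ω, ‖n ω‖ ^ 2 ∂μ ≤ s) (hEX : ∀ i j, μ[X i j | m] =ᵐ[μ] g)
    (hVX : ∀ i j, ∀ᵐ ω ∂μ, μ[fun y => ‖X i j y‖ ^ 2 | m] ω ≤ V ^ 2) :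
    ∀ᵐ ω ∂μ, IsOverTheAirRound (condExpKernel μ m ω) h X n m_h σ V s (g ω) := by
  have hh_meas (i : Fin N) : AEMeasurable (h i) μ := (hh i).aestronglyMeasurable.aemeasurable
  have hn_meas : AEMeasurable n μ := hn.aestronglyMeasurable.aemeasurable
  have hfam := aemeasurable_otaFam hh_meas
    (fun i j => (hX i j).aestronglyMeasurable.aemeasurable) hn_meas
  have hgain_mean (i : Fin N) := ae_integral_condExpKernel_eq_of_indep hm (hh_meas i) (hhm i)
    stronglyMeasurable_id ((hh i).integrable one_le_two)
  have hgain_sq (i : Fin N) := ae_integral_condExpKernel_eq_of_indep hm (hh_meas i) (hhm i)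
    (φ := fun x : ℝ => x ^ 2) (by fun_prop) (hh i).integrable_sq
  have hnoise_mean := ae_integral_condExpKernel_eq_of_indep hm hn_meas hnm
    stronglyMeasurable_id (hn.integrable one_le_two)
  have hnoise_sq := ae_integral_condExpKernel_eq_of_indep hm hn_meas hnm
    (φ := fun x => ‖x‖ ^ 2) (by fun_prop) (hn.integrable_norm_pow two_ne_zero)
  have hsample_mean (i : Fin N) (j : Fin M) : ∀ᵐ ω ∂μ, ∫ y, X i j y ∂condExpKernel μ m ω = g ω :=
    (condExp_ae_eq_integral_condExpKernel hm ((hX i j).integrable one_le_two)).symm.trans (hEX i j)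
  have hsample_sq (i : Fin N) (j : Fin M) :
      ∀ᵐ ω ∂μ, ∫ y, ‖X i j y‖ ^ 2 ∂condExpKernel μ m ω ≤ V ^ 2 :=
    (condExp_ae_eq_integral_condExpKernel hm ((hX i j).integrable_norm_pow two_ne_zero)).symm.le
      |>.trans (hVX i j)
  filter_upwards [ae_all_iff.2 fun i => ae_memLp_two_condExpKernel (hh i),
    ae_all_iff.2 fun i => ae_all_iff.2 fun j => ae_memLp_two_condExpKernel (hX i j),
    ae_memLp_two_condExpKernel hn, ae_indepFun_samples hm hfam hindep,
    ae_indepFun_gain_batch hm hfam hindep, ae_indepFun_agents hm hfam hindep,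
    ae_indepFun_agents_noise hm hfam hindep, ae_all_iff.2 hgain_mean, ae_all_iff.2 hgain_sq,
    ae_all_iff.2 fun i => ae_all_iff.2 (hsample_mean i),
    ae_all_iff.2 fun i => ae_all_iff.2 (hsample_sq i), hnoise_mean, hnoise_sq]
    with ω hh_ω hX_ω hn_ω hsamples hbatch hagents hnoise hEh_ω hEh2_ω hEX_ω hVX_ω hEn_ω hVn_ω
  exact ⟨hh_ω, hX_ω, hn_ω, hsamples, hbatch, hagents, hnoise, fun i => (hEh_ω i).trans (hEh i),
    fun i => (hEh2_ω i).trans_le (hEh2 i), hEX_ω, hVX_ω, hEn_ω.trans hEn, hVn_ω.trans_le hVn⟩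

theorem overTheAir_telescoped_general {Ω E : Type*} [mΩ : MeasurableSpace Ω]
    [StandardBorelSpace Ω] {μ : Measure Ω} [IsProbabilityMeasure μ] [NormedAddCommGroup E]
    [InnerProductSpace ℝ E] [CompleteSpace E] [MeasurableSpace E] [BorelSpace E]
    [SecondCountableTopology E] {N M : ℕ} (hN : 0 < N) (hM : 0 < M) {m_h σ V s α : ℝ} {L : NNReal}
    (hm_h : 0 < m_h) (hα : 0 ≤ α) (hαL : α * (m_h * L) ≤ 1) {J : E → ℝ}
    (hJ : Differentiable ℝ J) (hLip : LipschitzWith L (∇ J)) {𝓕 : ℕ → MeasurableSpace Ω}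
    (h𝓕 : ∀ k, 𝓕 k ≤ mΩ) {h : ℕ → Fin N → Ω → ℝ} {X : ℕ → Fin N → Fin M → Ω → E}
    {n θ : ℕ → Ω → E} (hθ0 : MemLp (θ 0) 2 μ)
    (hθ : ∀ k, θ (k + 1) = fun ω => θ k ω - (α / N) • otaAggregate (h k) (X k) (n k) ω)
    (hv : ∀ k, AEStronglyMeasurable (otaAggregate (h k) (X k) (n k)) μ)
    (hround : ∀ k, ∀ᵐ ω ∂μ, IsOverTheAirRound (condExpKernel μ (𝓕 k) ω) (h k) (X k) (n k)
      m_h σ V s (∇ J (θ k ω))) (K : ℕ) :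
    ∫ ω, J (θ K ω) ∂μ - ∫ ω, J (θ 0 ω) ∂μ ≤
      α * ((M - 1) * σ - M * (N + 1) * m_h ^ 2) / (2 * M * N * m_h) *
          ∑ k ∈ Finset.range K, ∫ ω, ‖∇ J (θ k ω)‖ ^ 2 ∂μ
        + α * K * s / (2 * m_h * N ^ 2) + α * K * σ * V ^ 2 / (2 * M * N * m_h) := by
  have hv_memLp (k : ℕ) (hθk : MemLp (θ k) 2 μ) : MemLp (otaAggregate (h k) (X k) (n k)) 2 μ :=
    memLp_otaAggregate_of_ae_isOverTheAirRound (h𝓕 k) hM (hv k) (memLp_lipschitzWith_comp hLip hθk)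
      (hround k)
  have hθ_memLp (k : ℕ) : MemLp (θ k) 2 μ := by
    induction k with
    | zero => exact hθ0
    | succ k hθk => exact hθ k ▸ hθk.sub ((hv_memLp k hθk).const_smul _)
  calc ∫ ω, J (θ K ω) ∂μ - ∫ ω, J (θ 0 ω) ∂μ
      = ∑ k ∈ Finset.range K, (∫ ω, J (θ (k + 1) ω) ∂μ - ∫ ω, J (θ k ω) ∂μ) :=
        (Finset.sum_range_sub (fun k => ∫ ω, J (θ k ω) ∂μ) K).symm
    _ ≤ ∑ k ∈ Finset.range K,
          (α * ((M - 1) * σ - M * (N + 1) * m_h ^ 2) / (2 * M * N * m_h) *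
              ∫ ω, ‖∇ J (θ k ω)‖ ^ 2 ∂μ
            + (α * s / (2 * m_h * N ^ 2) + α * σ * V ^ 2 / (2 * M * N * m_h))) := by
        refine Finset.sum_le_sum fun k _ => ?_
        rw [hθ k]
        exact integral_comp_sub_smul_otaAggregate_sub_le (h𝓕 k) hN hM hm_h hα hαL hJ hLip
          (hθ_memLp k) (hv_memLp k (hθ_memLp k)) (hround k)
    _ = _ := by
        rw [Finset.sum_add_distrib, ← Finset.mul_sum, Finset.sum_const, Finset.card_range,
          nsmul_eq_mul]
        ring

/-- telescoped inequality, Appendix C of the paper.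
In the over-the-air federated PG model, if `0 < α ≤ 1/(m_h L)`, then for every `K ≥ 1`,
`E[J(θ^K)] - J(θ^0) ≤ (α((M-1)σ_h² - M(N+1)m_h²)/(2 M N m_h)) Σ_{k<K} E[‖∇J(θ^k)‖²]
  + α K σ̄²/(2 m_h N²) + α K σ_h² V²/(2 M N m_h)`. -/
theorem overTheAir_telescoped
    {d : ℕ} (hd : 1 ≤ d) {N M : ℕ} (hN : 0 < N) (hM : 0 < M)
    {Ω : Type*} [mΩ : MeasurableSpace Ω] [StandardBorelSpace Ω] [Nonempty Ω]
    (μ : Measure Ω) [IsProbabilityMeasure μ]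
    (m_h σ_h2 V σbar2 α L : ℝ)
    (hm : 0 < m_h) (hσh : 0 ≤ σ_h2) (hV : 0 ≤ V) (hσbar : 0 ≤ σbar2)
    (hL : 0 < L) (hα : 0 < α) (hαL : α ≤ 1 / (m_h * L))
    (J : EuclideanSpace ℝ (Fin d) → ℝ) (hJ : Differentiable ℝ J)
    (hLip : ∀ x y : EuclideanSpace ℝ (Fin d),
      ‖gradient J x - gradient J y‖ ≤ L * ‖x - y‖)
    (Jstar : ℝ) (hJstar : IsGLB (Set.range J) Jstar)
    (𝓕 : Filtration ℕ mΩ)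
    (h : ℕ → Fin N → Ω → ℝ)
    (X : ℕ → Fin N → Fin M → Ω → EuclideanSpace ℝ (Fin d))
    (n : ℕ → Ω → EuclideanSpace ℝ (Fin d))
    (θ : ℕ → Ω → EuclideanSpace ℝ (Fin d))
    (θ0 : EuclideanSpace ℝ (Fin d)) (hθ0 : θ 0 = fun _ => θ0)
    (v : ℕ → Ω → EuclideanSpace ℝ (Fin d))
    (hv : ∀ k, v k = fun ω =>
      (∑ i : Fin N, h k i ω • ((1 / (M : ℝ)) • ∑ m : Fin M, X k i m ω)) + n k ω)
    (hθ : ∀ k, θ (k + 1) = fun ω => θ k ω - (α / (N : ℝ)) • v k ω)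
    (hθmeas : ∀ k, Measurable[𝓕 k] (θ k))
    (hh2 : ∀ k i, MemLp (h k i) 2 μ)
    (hX2 : ∀ k i m, MemLp (X k i m) 2 μ)
    (hn2 : ∀ k, MemLp (n k) 2 μ)
    (hcondind : ∀ k, iCondIndepFun (𝓕 k) (𝓕.le k)
      (otaFam (h k) (X k) (n k)) μ)
    (hhind : ∀ k i, Indep (MeasurableSpace.comap (h k i) inferInstance) (𝓕 k) μ)
    (hnind : ∀ k, Indep (MeasurableSpace.comap (n k) inferInstance) (𝓕 k) μ)
    (hEh : ∀ k i, ∫ ω, h k i ω ∂μ = m_h)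
    (hEh2 : ∀ k i, ∫ ω, (h k i ω) ^ 2 ∂μ = σ_h2)
    (hEn : ∀ k, ∫ ω, n k ω ∂μ = 0)
    (hVn : ∀ k, ∫ ω, ‖n k ω‖ ^ 2 ∂μ ≤ σbar2)
    (hEX : ∀ k i m, μ[X k i m | 𝓕 k] =ᵐ[μ] fun ω => gradient J (θ k ω))
    (hVX : ∀ k i m, ∀ᵐ ω ∂μ, (μ[fun ω' => ‖X k i m ω'‖ ^ 2 | 𝓕 k]) ω ≤ V ^ 2) :
    ∀ K : ℕ, 1 ≤ K →
      (∫ ω, J (θ K ω) ∂μ) - J θ0 ≤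
        (α * (((M : ℝ) - 1) * σ_h2 - (M : ℝ) * ((N : ℝ) + 1) * m_h ^ 2)
            / (2 * (M : ℝ) * (N : ℝ) * m_h))
            * ∑ k ∈ Finset.range K, ∫ ω, ‖gradient J (θ k ω)‖ ^ 2 ∂μ
          + α * (K : ℝ) * σbar2 / (2 * m_h * (N : ℝ) ^ 2)
          + α * (K : ℝ) * σ_h2 * V ^ 2 / (2 * (M : ℝ) * (N : ℝ) * m_h) := by
  have hαL' : α * (m_h * L) ≤ 1 := (le_div_iff₀ (by positivity)).1 hαL
  have hround (k : ℕ) := ae_isOverTheAirRound_condExpKernel (𝓕.le k) (hh2 k) (hX2 k) (hn2 k)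
    (hcondind k) (hhind k) (hnind k) (hEh k) (fun i => (hEh2 k i).le) (hEn k) (hVn k) (hEX k)
    (hVX k)
  have hv_meas (k : ℕ) : AEStronglyMeasurable (otaAggregate (h k) (X k) (n k)) μ :=
    aestronglyMeasurable_otaAggregate (fun i => (hh2 k i).aestronglyMeasurable)
      (fun i j => (hX2 k i j).aestronglyMeasurable) (hn2 k).aestronglyMeasurable
  have hLip' : LipschitzWith ⟨L, hL.le⟩ (∇ J) := LipschitzWith.of_dist_le_mul fun x y => by
    rw [dist_eq_norm, dist_eq_norm]
    exact hLip x y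
  intro K _
  simpa [hθ0] using overTheAir_telescoped_general hN hM (L := ⟨L, hL.le⟩) hm hα.le hαL' hJ hLip'
    𝓕.le (hθ0 ▸ memLp_const θ0) (fun k => (hθ k).trans (by rw [hv k]; rfl)) hv_meas hround K
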